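/- arXiv:0806.2646 — 6 statements merged into one kernel-verified Lean document; each statement's English description precedes it below -/
import Mathlib

section
/- Let x_1,…,x_N ∈ ℝ² with Σ_i x_i = 0, (1/N)Σ_i (x_i^{(1)})² = σ² > 0, (1/N)Σ_i (x_i^{(2)})² = τ² > 0. Let each point have K neighbors via an assignment n(i,j) ∈ {1,…,N}, with nonnegative weights w_{i,j} ≥ 0. Define e_i^{(l)} = Σ_{j=1}^K w_{i,j}(x_i^{(l)} − x_{n(i,j)}^{(l)})² and ē^{(l)} = (1/N)Σ_i e_i^{(l)} for l = 1,2. Let κ ≥ 1 and ρ > 0, define g(s) = κs for s ≥ 0 and g(s) = −s for s < 0, let z̄ = (1/N)Σ_i g(x_i^{(1)})/ρ, and set y_i = (x_i^{(1)}/σ, x_i^{(2)}/τ) and z_i = (x_i^{(1)}/σ, g(x_i^{(1)})/ρ − z̄). Let Φ(M) = Σ_i Σ_j w_{i,j}‖m_i − m_{n(i,j)}‖² for points m_i ∈ ℝ². If (κ²/ρ²)·ē^{(1)} < ē^{(2)}/τ², then Φ(Y) > Φ(Z). -/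
/-! The map `g` is `κ`-Lipschitz because `κ ≥ 1`, so edge by edge the second coordinate of `Z`
contributes at most `κ²/ρ²` times the squared difference of the first coordinates of `X`; the
shift by the mean cancels. The first coordinates of `Y` and `Z` coincide and contribute equally,
while the second coordinate of `Y` contributes exactly `Σ e⁽²⁾/τ²`. The hypothesis on the mean
errors, multiplied by `N`, therefore separates the two costs. -/

/-- The folded piecewise-linear map is `κ`-Lipschitz, in squared form. -/
lemma sq_fold_sub_le (κ : ℝ) (hκ : 1 ≤ κ) (g : ℝ → ℝ)
    (hg : ∀ s, g s = if 0 ≤ s then κ * s else -s) (a b : ℝ) :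
    (g a - g b) ^ 2 ≤ κ ^ 2 * (a - b) ^ 2 := by
  rw [← mul_pow, sq_le_sq, abs_mul, abs_of_nonneg (by linarith : 0 ≤ κ), hg, hg]
  rcases le_total b a with h | h
  · rw [abs_of_nonneg (sub_nonneg.2 h), abs_le]
    split_ifs <;> constructor <;> nlinarith
  · rw [abs_of_nonpos (sub_nonpos.2 h), abs_le]
    split_ifs <;> constructor <;> nlinarith

/-- Theorem 2, LEM/DFM case: if `(κ²/ρ²)·ē⁽¹⁾ < ē⁽²⁾/τ²` then the LEM/DFM cost of the
normalized embedding `Y` strictly exceeds that of the collapsed embedding `Z`. -/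
theorem stmt_1 (N K : ℕ) (hN : 0 < N) (hK : 0 < K)
    (x : Fin N → ℝ × ℝ)
    (hmean1 : ∑ i, (x i).1 = 0) (hmean2 : ∑ i, (x i).2 = 0)
    (σ τ : ℝ) (hσ : 0 < σ) (hτ : 0 < τ)
    (hvar1 : (1 / (N : ℝ)) * ∑ i, ((x i).1)^2 = σ^2)
    (hvar2 : (1 / (N : ℝ)) * ∑ i, ((x i).2)^2 = τ^2)
    (n : Fin N → Fin K → Fin N)
    (w : Fin N → Fin K → ℝ) (hw : ∀ i j, 0 ≤ w i j)
    (e1 e2 : Fin N → ℝ)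
    (he1 : ∀ i, e1 i = ∑ j, w i j * ((x i).1 - (x (n i j)).1)^2)
    (he2 : ∀ i, e2 i = ∑ j, w i j * ((x i).2 - (x (n i j)).2)^2)
    (ebar1 ebar2 : ℝ)
    (hebar1 : ebar1 = (1 / (N : ℝ)) * ∑ i, e1 i)
    (hebar2 : ebar2 = (1 / (N : ℝ)) * ∑ i, e2 i)
    (κ ρ : ℝ) (hκ : 1 ≤ κ) (hρ : 0 < ρ)
    (g : ℝ → ℝ) (hg : ∀ s, g s = if 0 ≤ s then κ * s else -s)
    (zbar : ℝ) (hzbar : zbar = (1 / (N : ℝ)) * ∑ i, g ((x i).1) / ρ)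
    (y z : Fin N → ℝ × ℝ)
    (hy : ∀ i, y i = ((x i).1 / σ, (x i).2 / τ))
    (hz : ∀ i, z i = ((x i).1 / σ, g ((x i).1) / ρ - zbar))
    (Φ : (Fin N → ℝ × ℝ) → ℝ)
    (hΦ : ∀ M, Φ M = ∑ i, ∑ j, w i j *
      (((M i).1 - (M (n i j)).1)^2 + ((M i).2 - (M (n i j)).2)^2))
    (hcond : κ^2 / ρ^2 * ebar1 < ebar2 / τ^2) :
    Φ y > Φ z := by
  have hN' : (0 : ℝ) < N := by exact_mod_cast hN
  have hsum : κ ^ 2 / ρ ^ 2 * ∑ i, e1 i < (∑ i, e2 i) / τ ^ 2 := by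
    have h := mul_lt_mul_of_pos_left hcond hN'
    rw [hebar1, hebar2] at h
    have hinv : (N : ℝ) * (1 / N) = 1 := by field_simp
    calc _ = (N * (1 / N : ℝ)) * (κ ^ 2 / ρ ^ 2 * ∑ i, e1 i) := by rw [hinv, one_mul]
      _ = (N : ℝ) * (κ ^ 2 / ρ ^ 2 * (1 / N * ∑ i, e1 i)) := by ring
      _ < _ := h
      _ = (N * (1 / N : ℝ)) * ((∑ i, e2 i) / τ ^ 2) := by ring
      _ = _ := by rw [hinv, one_mul]
  simp only [he1, he2, Finset.mul_sum, Finset.sum_div] at hsum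
  have hΦy : Φ y = ∑ i, ∑ j, w i j * ((x i).1 / σ - (x (n i j)).1 / σ) ^ 2
      + ∑ i, ∑ j, w i j * ((x i).2 - (x (n i j)).2) ^ 2 / τ ^ 2 := by
    rw [hΦ]
    simp only [hy, ← Finset.sum_add_distrib]
    refine Finset.sum_congr rfl fun i _ => Finset.sum_congr rfl fun j _ => ?_
    ring
  have hΦz : Φ z ≤ ∑ i, ∑ j, w i j * ((x i).1 / σ - (x (n i j)).1 / σ) ^ 2
      + ∑ i, ∑ j, κ ^ 2 / ρ ^ 2 * (w i j * ((x i).1 - (x (n i j)).1) ^ 2) := by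
    rw [hΦ]
    simp only [hz, ← Finset.sum_add_distrib]
    refine Finset.sum_le_sum fun i _ => Finset.sum_le_sum fun j _ => ?_
    have h := mul_le_mul_of_nonneg_left
      (div_le_div_of_nonneg_right (sq_fold_sub_le κ hκ g hg (x i).1 (x (n i j)).1)
        (sq_nonneg ρ)) (hw i j)
    have heq : (g (x i).1 / ρ - zbar - (g (x (n i j)).1 / ρ - zbar)) ^ 2
        = (g (x i).1 - g (x (n i j)).1) ^ 2 / ρ ^ 2 := by ring
    rw [mul_add, heq]
    calc _ ≤ _ := add_le_add_right h _
      _ = _ := by ring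
  linarith
end

section
/- Let x_1,…,x_N ∈ ℝ² with Σ_i x_i = 0, (1/N)Σ_i (x_i^{(1)})² = σ² > 0, (1/N)Σ_i (x_i^{(2)})² = τ² > 0. Let each point i have a neighborhood of K+1 points indexed by n(i,j), j = 0,…,K, with n(i,0) = i, and let r(i) be the maximum pairwise Euclidean distance among the K+1 points of neighborhood i. Let W_1,…,W_N be real p×(K+1) matrices with W_i·𝟙 = 0 for every i, where 𝟙 is the all-ones vector. Let X_i^{(l)} ∈ ℝ^{K+1} be the vector of l-th coordinates of the points of neighborhood i, define e_i^{(l)} = ‖W_i X_i^{(l)}‖² and ē^{(l)} = (1/N)Σ_i e_i^{(l)}. Let κ ≥ 1 and ρ > 0, define g(s) = κs for s ≥ 0 and g(s) = −s for s < 0, z̄ = (1/N)Σ_i g(x_i^{(1)})/ρ, y_i = (x_i^{(1)}/σ, x_i^{(2)}/τ), z_i = (x_i^{(1)}/σ, g(x_i^{(1)})/ρ − z̄). Let N₀ be the set of indices i whose neighborhood first coordinates attain both strictly positive and strictly negative values, and let r_max = max_{i∈N₀} r(i) (taken as 0 if N₀ is empty). Assume there is c_a ≥ 0 such that for every i ∈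 N₀ and every u ∈ ℝ^{K+1}, ‖W_i u‖² ≤ c_a·(max_{j,k}(u_j − u_k))². Define Φ(M) = Σ_i ‖W_i M_i‖_F² where M_i is the (K+1)×2 matrix whose j-th row is m_{n(i,j)}. If (κ²/ρ²)·(ē^{(1)} + (|N₀|/N)·c_a·r_max²) < ē^{(2)}/τ², then Φ(Y) > Φ(Z). -/
/-!
The first coordinates of `Y` and `Z` coincide, so only the second ones are compared. Since
`W_i 𝟙 = 0`, the energy `‖W_i (c u + d 𝟙)‖²` equals `c² ‖W_i u‖²` (`energy_affine`); hence the
shift `z̄` is irrelevant, and the second coordinate of `Y` contributes `e_i⁽²⁾ / τ²`.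

On a neighborhood whose first coordinates do not change sign, `g` is linear with slope `κ` or `-1`,
so the second coordinate of `Z` contributes at most `(κ²/ρ²) e_i⁽¹⁾`. On a neighborhood in `N₀`,
`g` is `κ`-Lipschitz (`fold_sub_le`), so the oscillation of `g` is at most `κ r(i)` and the
contribution is at most `(κ²/ρ²) c_a r_max²`. Summing over `i` and dividing by `N` bounds the energy
of the second coordinate of `Z` by the left side of the strict inequality assumed.
-/

/-- Weights annihilating constants turn an affine change of the coordinate into a factor `c ^ 2`. -/
theorem energy_affine {p K : ℕ} (W : Matrix (Fin p) (Fin (K+1)) ℝ)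
    (hW : W.mulVec (fun _ => (1 : ℝ)) = 0) (c d : ℝ) (u : Fin (K+1) → ℝ) :
    ∑ a, (W.mulVec (fun j => c * u j + d) a)^2 = c^2 * ∑ a, (W.mulVec u a)^2 := by
  have h : (fun j => c * u j + d) = c • u + d • (fun _ => (1 : ℝ)) := by
    ext j; simp
  rw [h, Matrix.mulVec_add, Matrix.mulVec_smul, Matrix.mulVec_smul, hW, Finset.mul_sum]
  refine Finset.sum_congr rfl fun a _ => ?_
  simp [mul_pow]

/-- The folding function is `κ`-Lipschitz, since both of its slopes are at most `κ` in modulus. -/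
theorem fold_sub_le {κ : ℝ} (hκ : 1 ≤ κ) {g : ℝ → ℝ}
    (hg : ∀ s, g s = if 0 ≤ s then κ * s else -s) (s t : ℝ) :
    g s - g t ≤ κ * |s - t| := by
  rw [hg, hg]
  split_ifs with h1 h2 h2
  · nlinarith [le_abs_self (s - t)]
  · push Not at h2
    rw [abs_of_nonneg (by linarith)]
    nlinarith
  · push Not at h1
    rw [abs_of_nonpos (by linarith)]
    nlinarith
  · nlinarith [neg_abs_le (s - t), abs_nonneg (s - t)]

/-- The pairwise supremum of Euclidean distances dominates the oscillation of the folded first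
coordinate, up to the Lipschitz constant `κ`. -/
theorem osc_fold_sq_le {K : ℕ} {κ : ℝ} (hκ : 1 ≤ κ) {g : ℝ → ℝ}
    (hg : ∀ s, g s = if 0 ≤ s then κ * s else -s) (v : Fin (K+1) → ℝ × ℝ) (R : ℝ)
    (hR : (⨆ jk : Fin (K+1) × Fin (K+1),
      Real.sqrt (((v jk.1).1 - (v jk.2).1)^2 + ((v jk.1).2 - (v jk.2).2)^2)) ≤ R) :
    (⨆ jk : Fin (K+1) × Fin (K+1), (g (v jk.1).1 - g (v jk.2).1))^2 ≤ κ^2 * R^2 := by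
  rw [← mul_pow]
  apply pow_le_pow_left₀
  · refine le_ciSup_of_le (Set.finite_range _).bddAbove ((0 : Fin (K+1)), (0 : Fin (K+1))) ?_
    simp
  · refine ciSup_le fun jk => (fold_sub_le hκ hg _ _).trans ?_
    refine mul_le_mul_of_nonneg_left ?_ (by linarith)
    refine le_trans ?_ ((le_ciSup (Set.finite_range _).bddAbove jk).trans hR)
    exact Real.abs_le_sqrt (by nlinarith [sq_nonneg ((v jk.1).2 - (v jk.2).2)])


/-- Theorem 2 (general normalized-output algorithms): if
`(κ²/ρ²)·(ē⁽¹⁾ + (|N₀|/N)·c_a·r_max²) < ē⁽²⁾/τ²` then `Φ(Y) > Φ(Z)`. -/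
theorem stmt_2 (N K p : ℕ) (hN : 0 < N) (hK : 0 < K) (hp : 0 < p)
    (x : Fin N → ℝ × ℝ)
    (hmean1 : ∑ i, (x i).1 = 0) (hmean2 : ∑ i, (x i).2 = 0)
    (σ τ : ℝ) (hσ : 0 < σ) (hτ : 0 < τ)
    (hvar1 : (1 / (N : ℝ)) * ∑ i, ((x i).1)^2 = σ^2)
    (hvar2 : (1 / (N : ℝ)) * ∑ i, ((x i).2)^2 = τ^2)
    (n : Fin N → Fin (K+1) → Fin N) (hn0 : ∀ i, n i 0 = i)
    (r : Fin N → ℝ)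
    (hr : ∀ i, r i = ⨆ jk : Fin (K+1) × Fin (K+1),
      Real.sqrt (((x (n i jk.1)).1 - (x (n i jk.2)).1)^2
        + ((x (n i jk.1)).2 - (x (n i jk.2)).2)^2))
    (W : Fin N → Matrix (Fin p) (Fin (K+1)) ℝ)
    (hW1 : ∀ i, (W i).mulVec (fun _ => (1 : ℝ)) = 0)
    (e1 e2 : Fin N → ℝ)
    (he1 : ∀ i, e1 i = ∑ a, ((W i).mulVec (fun j => (x (n i j)).1) a)^2)
    (he2 : ∀ i, e2 i = ∑ a, ((W i).mulVec (fun j => (x (n i j)).2) a)^2)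
    (ebar1 ebar2 : ℝ)
    (hebar1 : ebar1 = (1 / (N : ℝ)) * ∑ i, e1 i)
    (hebar2 : ebar2 = (1 / (N : ℝ)) * ∑ i, e2 i)
    (κ ρ : ℝ) (hκ : 1 ≤ κ) (hρ : 0 < ρ)
    (g : ℝ → ℝ) (hg : ∀ s, g s = if 0 ≤ s then κ * s else -s)
    (zbar : ℝ) (hzbar : zbar = (1 / (N : ℝ)) * ∑ i, g ((x i).1) / ρ)
    (y z : Fin N → ℝ × ℝ)
    (hy : ∀ i, y i = ((x i).1 / σ, (x i).2 / τ))
    (hz : ∀ i, z i = ((x i).1 / σ, g ((x i).1) / ρ - zbar))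
    (N0 : Finset (Fin N))
    (hN0 : ∀ i, i ∈ N0 ↔ ((∃ j, 0 < (x (n i j)).1) ∧ (∃ j, (x (n i j)).1 < 0)))
    (rmax : ℝ)
    (hrmax : rmax = if h : N0.Nonempty then N0.sup' h r else 0)
    (ca : ℝ) (hca0 : 0 ≤ ca)
    (hca : ∀ i ∈ N0, ∀ u : Fin (K+1) → ℝ,
      ∑ a, ((W i).mulVec u a)^2
        ≤ ca * (⨆ jk : Fin (K+1) × Fin (K+1), (u jk.1 - u jk.2))^2)
    (Φ : (Fin N → ℝ × ℝ) → ℝ)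
    (hΦ : ∀ M, Φ M = ∑ i,
      (∑ a, ((W i).mulVec (fun j => (M (n i j)).1) a)^2
        + ∑ a, ((W i).mulVec (fun j => (M (n i j)).2) a)^2))
    (hcond : κ^2 / ρ^2 * (ebar1 + ((N0.card : ℝ) / (N : ℝ)) * ca * rmax^2) < ebar2 / τ^2) :
    Φ y > Φ z := by
  have hN' : (0 : ℝ) < N := by exact_mod_cast hN
  have he1nn : ∀ i, 0 ≤ e1 i := fun i => by
    rw [he1]; exact Finset.sum_nonneg fun a _ => sq_nonneg _
  have hr_le : ∀ i ∈ N0, r i ≤ rmax := fun i hi => by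
    rw [hrmax, dif_pos ⟨i, hi⟩]; exact Finset.le_sup' r hi
  have hfold : ∀ i, ∑ a, ((W i).mulVec (fun j => g (x (n i j)).1) a)^2
      ≤ κ^2 * (e1 i + if i ∈ N0 then ca * rmax^2 else 0) := by
    intro i
    by_cases hi : i ∈ N0
    · rw [if_pos hi]
      have h1 := hca i hi (fun j => g (x (n i j)).1)
      have h2 := osc_fold_sq_le hκ hg (fun j => x (n i j)) rmax ((hr i) ▸ hr_le i hi)
      have h3 := mul_le_mul_of_nonneg_left h2 hca0
      have h4 := mul_nonneg (sq_nonneg κ) (he1nn i)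
      linarith
    · rw [if_neg hi, add_zero]
      rw [hN0, not_and_or] at hi
      push Not at hi
      rcases hi with h | h
      · have : (fun j => g (x (n i j)).1) = fun j => (-1) * (x (n i j)).1 + 0 := by
          ext j
          rw [hg]
          split_ifs with h0
          · rw [le_antisymm (h j) h0]; simp
          · ring
        rw [this, energy_affine _ (hW1 i), ← he1]
        nlinarith [he1nn i, mul_nonneg (he1nn i) (by nlinarith : 0 ≤ κ^2 - 1)]
      · have : (fun j => g (x (n i j)).1) = fun j => κ * (x (n i j)).1 + 0 := by
          ext j
          rw [hg, if_pos (h j), add_zero]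
        rw [this, energy_affine _ (hW1 i), ← he1]
  have hY : ∀ i, ∑ a, ((W i).mulVec (fun j => (y (n i j)).2) a)^2 = (1 / τ^2) * e2 i := by
    intro i
    have : (fun j => (y (n i j)).2) = fun j => (1 / τ) * (x (n i j)).2 + 0 := by
      ext j; rw [hy]; ring
    rw [this, energy_affine _ (hW1 i), ← he2, div_pow, one_pow]
  have hZ : ∀ i, ∑ a, ((W i).mulVec (fun j => (z (n i j)).2) a)^2
      ≤ (κ^2 / ρ^2) * (e1 i + if i ∈ N0 then ca * rmax^2 else 0) := by
    intro i
    have : (fun j => (z (n i j)).2) = fun j => (1 / ρ) * g (x (n i j)).1 + (-zbar) := by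
      ext j; rw [hz]; ring
    rw [this, energy_affine _ (hW1 i) (1 / ρ) (-zbar) (fun j => g (x (n i j)).1)]
    calc _ ≤ (1 / ρ)^2 * (κ^2 * (e1 i + if i ∈ N0 then ca * rmax^2 else 0)) :=
          mul_le_mul_of_nonneg_left (hfold i) (sq_nonneg _)
      _ = _ := by ring
  have hsum : ∑ i, (e1 i + if i ∈ N0 then ca * rmax^2 else 0)
      = N * (ebar1 + ((N0.card : ℝ) / (N : ℝ)) * ca * rmax^2) := by
    rw [Finset.sum_add_distrib, Finset.sum_ite_mem, Finset.univ_inter, Finset.sum_const,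
      nsmul_eq_mul, hebar1]
    field_simp
  have hsecond : ∑ i, ∑ a, ((W i).mulVec (fun j => (z (n i j)).2) a)^2
      < ∑ i, ∑ a, ((W i).mulVec (fun j => (y (n i j)).2) a)^2 := by
    calc _ ≤ ∑ i, (κ^2 / ρ^2) * (e1 i + if i ∈ N0 then ca * rmax^2 else 0) :=
          Finset.sum_le_sum fun i _ => hZ i
      _ = N * (κ^2 / ρ^2 * (ebar1 + ((N0.card : ℝ) / (N : ℝ)) * ca * rmax^2)) := by
          rw [← Finset.mul_sum, hsum]; ring
      _ < N * (ebar2 / τ^2) := mul_lt_mul_of_pos_left hcond hN'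
      _ = _ := by
          rw [Finset.sum_congr rfl fun i _ => hY i, ← Finset.mul_sum, hebar2]
          field_simp
  have hfirst : ∀ i, (z i).1 = (y i).1 := fun i => by rw [hz, hy]
  rw [gt_iff_lt, hΦ, hΦ, Finset.sum_add_distrib, Finset.sum_add_distrib]
  simp only [hfirst]
  linarith
end

section
/- In the LEM/DFM setting (x_1,…,x_N ∈ ℝ² with zero mean and coordinate variances σ² > 0 and τ² > 0, neighbor assignment n(i,j), nonnegative weights w_{i,j}, errors e_i^{(l)} = Σ_j w_{i,j}(x_i^{(l)} − x_{n(i,j)}^{(l)})², averages ē^{(l)}, κ ≥ 1, ρ > 0, embeddings Y and Z and cost Φ as before), assume additionally that ē^{(1)} < √2·ē^{(2)}, ē^{(2)} > 0, κ < 2^{1/4}, and ρ² > σ²/8. If the aspect ratio c = σ/τ satisfies 4 < c, then Φ(Y) > Φ(Z). -/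
/-- Corollary, LEM/DFM case: under `ē⁽¹⁾ < √2·ē⁽²⁾`, `ē⁽²⁾ > 0`, `κ < 2^{1/4}` and
`ρ² > σ²/8`, if the aspect ratio `c = σ/τ` satisfies `4 < c` then `Φ(Y) > Φ(Z)`. -/
theorem stmt_3 (N K : ℕ) (hN : 0 < N) (hK : 0 < K)
    (x : Fin N → ℝ × ℝ)
    (hmean1 : ∑ i, (x i).1 = 0) (hmean2 : ∑ i, (x i).2 = 0)
    (σ τ : ℝ) (hσ : 0 < σ) (hτ : 0 < τ)
    (hvar1 : (1 / (N : ℝ)) * ∑ i, ((x i).1)^2 = σ^2)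
    (hvar2 : (1 / (N : ℝ)) * ∑ i, ((x i).2)^2 = τ^2)
    (n : Fin N → Fin K → Fin N)
    (w : Fin N → Fin K → ℝ) (hw : ∀ i j, 0 ≤ w i j)
    (e1 e2 : Fin N → ℝ)
    (he1 : ∀ i, e1 i = ∑ j, w i j * ((x i).1 - (x (n i j)).1)^2)
    (he2 : ∀ i, e2 i = ∑ j, w i j * ((x i).2 - (x (n i j)).2)^2)
    (ebar1 ebar2 : ℝ)
    (hebar1 : ebar1 = (1 / (N : ℝ)) * ∑ i, e1 i)
    (hebar2 : ebar2 = (1 / (N : ℝ)) * ∑ i, e2 i)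
    (κ ρ : ℝ) (hκ : 1 ≤ κ) (hρ : 0 < ρ)
    (g : ℝ → ℝ) (hg : ∀ s, g s = if 0 ≤ s then κ * s else -s)
    (zbar : ℝ) (hzbar : zbar = (1 / (N : ℝ)) * ∑ i, g ((x i).1) / ρ)
    (y z : Fin N → ℝ × ℝ)
    (hy : ∀ i, y i = ((x i).1 / σ, (x i).2 / τ))
    (hz : ∀ i, z i = ((x i).1 / σ, g ((x i).1) / ρ - zbar))
    (Φ : (Fin N → ℝ × ℝ) → ℝ)
    (hΦ : ∀ M, Φ M = ∑ i, ∑ j, w i j *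
      (((M i).1 - (M (n i j)).1)^2 + ((M i).2 - (M (n i j)).2)^2))
    (he12 : ebar1 < Real.sqrt 2 * ebar2) (he2pos : 0 < ebar2)
    (hκ4 : κ < (2 : ℝ) ^ ((1 : ℝ) / 4))
    (hρσ : ρ^2 > σ^2 / 8)
    (hc : 4 < σ / τ) :
    Φ y > Φ z := by
  have hN' : (0 : ℝ) < N := by exact_mod_cast hN
  set A : ℝ := ∑ i, ∑ j, w i j * ((x i).1 - (x (n i j)).1) ^ 2 with hA
  set B : ℝ := ∑ i, ∑ j, w i j * ((x i).2 - (x (n i j)).2) ^ 2 with hB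
  have hA1 : ebar1 = 1 / N * A := by simp only [hebar1, he1, hA]
  have hB1 : ebar2 = 1 / N * B := by simp only [hebar2, he2, hB]
  have hA0 : 0 ≤ A :=
    Finset.sum_nonneg fun i _ => Finset.sum_nonneg fun j _ => mul_nonneg (hw i j) (sq_nonneg _)
  have hNi : (0 : ℝ) < 1 / N := by positivity
  have hB0 : 0 < B := by
    rw [hB1] at he2pos
    exact (mul_pos_iff_of_pos_left hNi).1 he2pos
  have hAB : A < √2 * B := by
    rw [hA1, hB1, mul_left_comm] at he12
    exact lt_of_mul_lt_mul_left he12 hNi.le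
  have hκ2 : κ ^ 2 < √2 := by
    have h : κ ^ 2 < ((2 : ℝ) ^ ((1 : ℝ) / 4)) ^ 2 := by gcongr
    rwa [← Real.rpow_natCast, ← Real.rpow_natCast, ← Real.rpow_mul (by norm_num),
      show (1 : ℝ) / 4 * ((2 : ℕ) : ℝ) = 1 / 2 by norm_num, ← Real.sqrt_eq_rpow,
      Real.rpow_natCast] at h
  have hκA : κ ^ 2 * A < 2 * B := by
    have h2 : √2 * √2 = 2 := Real.mul_self_sqrt (by norm_num)
    have hs : 0 < √2 := by positivity
    calc κ ^ 2 * A ≤ √2 * A := by gcongr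
      _ < √2 * (√2 * B) := by gcongr
      _ = 2 * B := by rw [← mul_assoc, h2]
  have hρτ : 2 * τ ^ 2 < ρ ^ 2 := by
    rw [lt_div_iff₀ hτ] at hc
    nlinarith
  have hΦy : Φ y = A / σ ^ 2 + B / τ ^ 2 := by
    rw [hΦ, hA, hB]
    simp only [Finset.sum_div, ← Finset.sum_add_distrib, hy]
    refine Finset.sum_congr rfl fun i _ => Finset.sum_congr rfl fun j _ => ?_
    field_simp
  have hΦz : Φ z ≤ A / σ ^ 2 + κ ^ 2 * A / ρ ^ 2 := by
    rw [hΦ, hA]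
    simp only [Finset.mul_sum, Finset.sum_div, ← Finset.sum_add_distrib, hz]
    refine Finset.sum_le_sum fun i _ => Finset.sum_le_sum fun j _ => ?_
    have h := sq_fold_sub_le κ hκ g hg (x i).1 (x (n i j)).1
    calc _ = w i j * ((x i).1 - (x (n i j)).1) ^ 2 / σ ^ 2
          + w i j * (g (x i).1 - g (x (n i j)).1) ^ 2 / ρ ^ 2 := by field_simp; ring
      _ ≤ w i j * ((x i).1 - (x (n i j)).1) ^ 2 / σ ^ 2
          + w i j * (κ ^ 2 * ((x i).1 - (x (n i j)).1) ^ 2) / ρ ^ 2 := by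
        have := hw i j
        gcongr
      _ = _ := by ring
  have hfin : κ ^ 2 * A / ρ ^ 2 < B / τ ^ 2 := by
    calc κ ^ 2 * A / ρ ^ 2 < 2 * B / ρ ^ 2 := by gcongr
      _ ≤ 2 * B / (2 * τ ^ 2) := by gcongr
      _ = B / τ ^ 2 := by field_simp
  rw [gt_iff_lt, hΦy]
  linarith
end

section
/- Let N, K, p, d be positive integers, let n : {1,…,N}×{0,…,K} → {1,…,N} be a neighbor assignment, and let W_1,…,W_N be real p×(K+1) matrices with ‖W_i‖_F² ≤ C for all i. Let S be an upper bound on the number of pairs (i,j) with n(i,j) = l, over all l (the maximum number of neighborhoods to which a single point belongs). For M ∈ ℝ^{N×d} define Φ(M) = Σ_{i=1}^N ‖W_i M_i‖_F², where M_i is the (K+1)×d matrix whose j-th row is the n(i,j)-th row of M. Let Y, E ∈ ℝ^{N×d} with ‖E‖_F = 1 and let ε > 0. Then Φ(Y + εE) ≥ (1 − 4ε)·Φ(Y) − 4ε·C·S. -/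
/-!
Entrywise, `(u + εv)² ≥ u² + 2εuv ≥ u² - ε(u² + v²)` for `ε > 0`. Summing over the entries
`u` of `W_i Y_i` and `v` of `W_i E_i` gives `Φ(Y + εE) ≥ (1 - ε)Φ(Y) - εΦ(E)`.
By Cauchy–Schwarz `‖W_i E_i‖_F² ≤ ‖W_i‖_F² ‖E_i‖_F² ≤ C ‖E_i‖_F²`, and every row of `E` is
counted at most `S` times in `∑ i, ‖E_i‖_F²`, so `Φ(E) ≤ C S`. Thus the estimate holds with the
constant `1` in place of `4`, and the stated one follows because `Φ(Y)` and `C S` are nonnegative.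
-/

/-- Submultiplicativity of the squared Frobenius norm, written with explicit sums. -/
lemma frobenius_sq_mul_le {p k d : ℕ} (A : Matrix (Fin p) (Fin k) ℝ)
    (B : Matrix (Fin k) (Fin d) ℝ) :
    ∑ a, ∑ c, ((A * B) a c) ^ 2 ≤ (∑ a, ∑ j, (A a j) ^ 2) * ∑ j, ∑ c, (B j c) ^ 2 := by
  rw [Finset.sum_comm (f := fun j c => (B j c) ^ 2), Finset.sum_mul_sum]
  refine Finset.sum_le_sum fun a _ => Finset.sum_le_sum fun c _ => ?_
  rw [Matrix.mul_apply]
  exact Finset.sum_mul_sq_le_sq_mul_sq _ _ _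

/-- A nonnegative weight summed along a map whose fibres have at most `S` elements is at most `S`
times its total. -/
lemma sum_comp_le_of_fiber_card_le {ι κ : Type*} [Fintype ι] [Fintype κ] [DecidableEq κ]
    (f : ι → κ) (g : κ → ℝ) (hg : ∀ l, 0 ≤ g l) (S : ℕ)
    (hS : ∀ l, (Finset.univ.filter (fun x => f x = l)).card ≤ S) :
    ∑ x, g (f x) ≤ S * ∑ l, g l := by
  rw [← Finset.sum_fiberwise Finset.univ f, Finset.mul_sum]
  refine Finset.sum_le_sum fun l _ => ?_
  have h : ∑ x ∈ Finset.univ.filter (fun x => f x = l), g (f x)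
      = ∑ x ∈ Finset.univ.filter (fun x => f x = l), g l :=
    Finset.sum_congr rfl fun x hx => by rw [(Finset.mem_filter.mp hx).2]
  rw [h, Finset.sum_const, nsmul_eq_mul]
  exact mul_le_mul_of_nonneg_right (by exact_mod_cast hS l) (hg l)


/-- Perturbation lemma: `Φ(Y + εE) ≥ (1 − 4ε)Φ(Y) − 4εCS` where `C` bounds `‖W_i‖_F²`
and `S` bounds the number of neighborhoods to which a single point belongs. -/
theorem stmt_5 (N K p d : ℕ) (hN : 0 < N) (hK : 0 < K) (hp : 0 < p) (hd : 0 < d)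
    (n : Fin N → Fin (K+1) → Fin N)
    (W : Fin N → Matrix (Fin p) (Fin (K+1)) ℝ)
    (C : ℝ) (hC : ∀ i, ∑ a, ∑ j, (W i a j)^2 ≤ C)
    (S : ℕ)
    (hS : ∀ l : Fin N,
      ((Finset.univ : Finset (Fin N × Fin (K+1))).filter (fun ij => n ij.1 ij.2 = l)).card ≤ S)
    (Φ : Matrix (Fin N) (Fin d) ℝ → ℝ)
    (hΦ : ∀ M, Φ M = ∑ i, ∑ a, ∑ c,
      ((W i * Matrix.of (fun j c' => M (n i j) c')) a c)^2)
    (Y E : Matrix (Fin N) (Fin d) ℝ)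
    (hE : ∑ l, ∑ c, (E l c)^2 = 1)
    (ε : ℝ) (hε : 0 < ε) :
    Φ (Y + ε • E) ≥ (1 - 4 * ε) * Φ Y - 4 * ε * C * S := by

  have hC0 : 0 ≤ C :=
    le_trans (Finset.sum_nonneg fun a _ => Finset.sum_nonneg fun j _ => sq_nonneg _) (hC ⟨0, hN⟩)
  have hΦ0 : 0 ≤ Φ Y := by
    rw [hΦ]
    positivity
  have hΦE : Φ E ≤ C * S := by
    calc Φ E ≤ ∑ i, C * ∑ j, ∑ c, (E (n i j) c) ^ 2 := by
          rw [hΦ]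
          refine Finset.sum_le_sum fun i _ => (frobenius_sq_mul_le _ _).trans ?_
          exact mul_le_mul_of_nonneg_right (hC i) (by positivity)
      _ = C * ∑ x : Fin N × Fin (K + 1), ∑ c, (E (n x.1 x.2) c) ^ 2 := by
          rw [← Finset.mul_sum, Fintype.sum_prod_type]
      _ ≤ C * S := by
          refine mul_le_mul_of_nonneg_left ?_ hC0
          have h := sum_comp_le_of_fiber_card_le (fun x : Fin N × Fin (K + 1) => n x.1 x.2)
            (fun l => ∑ c, (E l c) ^ 2) (fun l => by positivity) S hS
          rwa [hE, mul_one] at h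
  have hkey : (1 - ε) * Φ Y - ε * Φ E ≤ Φ (Y + ε • E) := by
    rw [hΦ, hΦ, hΦ]
    simp only [Finset.mul_sum, ← Finset.sum_sub_distrib]
    refine Finset.sum_le_sum fun i _ => Finset.sum_le_sum fun a _ =>
      Finset.sum_le_sum fun c _ => ?_
    have hlin : (W i * Matrix.of (fun j c' => (Y + ε • E) (n i j) c')) a c
        = (W i * Matrix.of (fun j c' => Y (n i j) c')) a c
          + ε * (W i * Matrix.of (fun j c' => E (n i j) c')) a c := by
      simp only [Matrix.mul_apply, Matrix.of_apply, Matrix.add_apply, Matrix.smul_apply,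
        smul_eq_mul, Finset.mul_sum, ← Finset.sum_add_distrib]
      exact Finset.sum_congr rfl fun j _ => by ring
    rw [hlin]
    generalize (W i * Matrix.of (fun j c' => Y (n i j) c')) a c = u
    generalize (W i * Matrix.of (fun j c' => E (n i j) c')) a c = v
    nlinarith [mul_nonneg hε.le (sq_nonneg (u + v)), sq_nonneg (ε * v)]
  have h1 := mul_le_mul_of_nonneg_left hΦE hε.le
  have h2 := mul_nonneg hε.le hΦ0
  have h3 : 0 ≤ ε * (C * S) := by positivity
  linarith
end

section
/- Let W be a real p×(K+1) matrix whose rows are orthonormal and each orthogonal to the all-ones vector 𝟙 ∈ ℝ^{K+1}, and let X be a real (K+1)×D matrix whose rows x_0,…,x_K satisfy ‖x_j − x_k‖ ≤ r for all 0 ≤ j, k ≤ K. Then ‖W·X‖_F² ≤ p·(K+1)·r². -/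
/-!
Since the rows of `W` annihilate constants, `X` may be translated so that its row `0` becomes the
origin. As each row of `W` has norm `1`, Cauchy–Schwarz bounds `(WX)_{ac}²` by
`∑ j, (X j c - X 0 c)²`. Summing over `c` gives a sum of `K + 1` squared distances to the point
`x₀`, each at most `r²`, and summing over `a` gives the factor `p`.
-/

/-- HLLE case of the neighborhood-cost bound: if `W` has orthonormal rows each
orthogonal to the all-ones vector and the rows of `X` have pairwise distances at
most `r`, then `‖WX‖_F² ≤ p(K+1)r²`. -/
theorem stmt_9 (p K D : ℕ)
    (W : Matrix (Fin p) (Fin (K+1)) ℝ)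
    (horth : ∀ a b : Fin p, ∑ j, W a j * W b j = if a = b then (1 : ℝ) else 0)
    (hones : ∀ a : Fin p, ∑ j, W a j = 0)
    (X : Matrix (Fin (K+1)) (Fin D) ℝ)
    (r : ℝ)
    (hr : ∀ j k : Fin (K+1), Real.sqrt (∑ c, (X j c - X k c)^2) ≤ r) :
    ∑ a, ∑ c, ((W * X) a c)^2 ≤ (p : ℝ) * ((K : ℝ) + 1) * r^2 := by
  have hentry (a : Fin p) (c : Fin D) : ((W * X) a c)^2 ≤ ∑ j, (X j c - X 0 c)^2 := by
    have hcenter : (W * X) a c = ∑ j, W a j * (X j c - X 0 c) := by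
      simp [Matrix.mul_apply, mul_sub, Finset.sum_sub_distrib, ← Finset.sum_mul, hones]
    have hunit : ∑ j, W a j ^ 2 = 1 := by simpa [sq] using horth a a
    rw [hcenter]
    simpa [hunit] using
      Finset.sum_mul_sq_le_sq_mul_sq Finset.univ (W a) (fun j => X j c - X 0 c)
  have hrow (a : Fin p) : ∑ c, ((W * X) a c)^2 ≤ ((K : ℝ) + 1) * r^2 :=
    calc ∑ c, ((W * X) a c)^2 ≤ ∑ c, ∑ j, (X j c - X 0 c)^2 :=
          Finset.sum_le_sum fun c _ => hentry a c
      _ = ∑ j, ∑ c, (X j c - X 0 c)^2 := Finset.sum_comm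
      _ ≤ ∑ _j : Fin (K+1), r^2 :=
          Finset.sum_le_sum fun j _ => (Real.sqrt_le_iff.mp (hr j 0)).2
      _ = ((K : ℝ) + 1) * r^2 := by simp
  calc ∑ a, ∑ c, ((W * X) a c)^2 ≤ ∑ _a : Fin p, ((K : ℝ) + 1) * r^2 :=
        Finset.sum_le_sum fun a _ => hrow a
    _ = (p : ℝ) * ((K : ℝ) + 1) * r^2 := by simp [mul_assoc]
end

section
/- Let μ be a probability measure on ℝ with a density f with respect to Lebesgue measure such that f(−x) = f(x) for all x and f is nonincreasing on [0,∞) (i.e., μ is symmetric around zero and unimodal), and suppose ∫ x² dμ(x) = σ² < ∞. Then the variance of |X| under μ is at least σ²/4; that is, ∫ x² dμ(x) − (∫ |x| dμ(x))² ≥ σ²/4, equivalently (∫ |x| dμ(x))² ≤ (3/4)·σ². -/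
/-!
For `a > 0` put `p x = (|x| - a) * (|x| - 3 * a)`. Then `∫ p = 0` over `[-3a, 3a]`, and `f` crosses
its value `f a` exactly where `p` changes sign inside that interval, so
`f x * p x ≥ f a * p x` for `|x| ≤ 3a`, while `f x * p x ≥ 0` for `|x| > 3a`. Integrating,
`0 ≤ ∫ p ∂μ = E X² - 4 a E|X| + 3 a²`, and the choice `a = (2/3) E|X|` turns this into
`(E|X|)² ≤ (3/4) E X²`. The value `3a = 2 E|X|` is the endpoint of the extremal uniform law.
-/

open MeasureTheory

/-- The test quadratic has zero mean on `[-3a, 3a]`. -/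
lemma integral_quad_abs_eq_zero (a : ℝ) (ha : 0 < a) :
    ∫ x in Set.Icc (-(3 * a)) (3 * a), (|x| - a) * (|x| - 3 * a) = 0 := by
  have hc : Continuous fun x : ℝ => (|x| - a) * (|x| - 3 * a) := by fun_prop
  have hpos : ∫ x in (0 : ℝ)..(3 * a), (|x| - a) * (|x| - 3 * a) = 0 := by
    have h1 : ∫ x in (0 : ℝ)..(3 * a), (|x| - a) * (|x| - 3 * a)
        = ∫ x in (0 : ℝ)..(3 * a), (x ^ 2 - 4 * a * x + 3 * a ^ 2) := by
      refine intervalIntegral.integral_congr fun x hx => ?_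
      rw [Set.uIcc_of_le (by positivity)] at hx
      simp only [abs_of_nonneg hx.1]
      ring
    rw [h1, intervalIntegral.integral_add, intervalIntegral.integral_sub,
      intervalIntegral.integral_const_mul, integral_pow, integral_id,
      intervalIntegral.integral_const]
    · simp only [smul_eq_mul]
      norm_num
      ring
    all_goals exact Continuous.intervalIntegrable (by fun_prop) _ _
  have hneg : ∫ x in (-(3 * a))..0, (|x| - a) * (|x| - 3 * a) = 0 := by
    have h := intervalIntegral.integral_comp_neg (a := 0) (b := 3 * a)
      (fun x : ℝ => (|x| - a) * (|x| - 3 * a))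
    simp only [abs_neg, neg_zero] at h
    rw [← h, hpos]
  rw [integral_Icc_eq_integral_Ioc, ← intervalIntegral.integral_of_le (by linarith),
    ← intervalIntegral.integral_add_adjacent_intervals (hc.intervalIntegrable _ 0)
      (hc.intervalIntegrable 0 _), hneg, hpos, add_zero]

/-- The single-crossing comparison between `f` and the constant `f a` on `[-3a, 3a]`. -/
lemma indicator_quad_le (f : ℝ → ℝ) (hf_nonneg : ∀ x, 0 ≤ f x)
    (hsymm : ∀ x, f (-x) = f x) (hmono : AntitoneOn f (Set.Ici 0)) (a : ℝ) (ha : 0 < a) (x : ℝ) :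
    (Set.Icc (-(3 * a)) (3 * a)).indicator (fun x => f a * ((|x| - a) * (|x| - 3 * a))) x
      ≤ f x * ((|x| - a) * (|x| - 3 * a)) := by
  have habs : f x = f |x| := by
    rcases abs_choice x with h | h <;> rw [h]
    exact (hsymm x).symm
  by_cases hx : x ∈ Set.Icc (-(3 * a)) (3 * a)
  · rw [Set.indicator_of_mem hx, habs]
    have h3 : |x| ≤ 3 * a := abs_le.2 hx
    rcases le_total |x| a with h | h
    · have hf := hmono (abs_nonneg x) ha.le h
      exact mul_le_mul_of_nonneg_right hf
        (mul_nonneg_of_nonpos_of_nonpos (by linarith) (by linarith))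
    · have hf := hmono ha.le (abs_nonneg x) h
      exact mul_le_mul_of_nonpos_right hf
        (mul_nonpos_of_nonneg_of_nonpos (by linarith) (by linarith))
  · rw [Set.indicator_of_notMem hx]
    have h3 : 3 * a < |x| := by
      by_contra! h
      exact hx (abs_le.1 h)
    exact mul_nonneg (hf_nonneg x) (mul_nonneg (by linarith) (by linarith))

/-- For a symmetric unimodal probability distribution on `ℝ` with variance `σ²`,
the variance of `|X|` is at least `σ²/4`:
`∫x²dμ − (∫|x|dμ)² ≥ σ²/4`. -/
theorem stmt_10 (μ : Measure ℝ) (hprob : IsProbabilityMeasure μ)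
    (f : ℝ → ℝ) (hf_meas : Measurable f) (hf_nonneg : ∀ x, 0 ≤ f x)
    (hμ : μ = volume.withDensity (fun x => ENNReal.ofReal (f x)))
    (hsymm : ∀ x, f (-x) = f x)
    (hmono : AntitoneOn f (Set.Ici 0))
    (σ : ℝ)
    (hint : Integrable (fun x => x^2) μ)
    (hvar : ∫ x, x^2 ∂μ = σ^2) :
    (∫ x, x^2 ∂μ) - (∫ x, |x| ∂μ)^2 ≥ σ^2 / 4 := by
  have hint1 : Integrable (fun x : ℝ => |x|) μ := by
    refine (hint.add (integrable_const (1 : ℝ))).mono' (by fun_prop) (ae_of_all _ fun x => ?_)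
    simp only [Real.norm_eq_abs, abs_abs, Pi.add_apply]
    nlinarith [sq_abs x, sq_nonneg (|x| - 1), sq_nonneg x]
  have key : ∀ a : ℝ, 0 < a → 0 ≤ (∫ x, x^2 ∂μ) - 4 * a * (∫ x, |x| ∂μ) + 3 * a ^ 2 := by
    intro a ha
    have hq : (fun x : ℝ => (|x| - a) * (|x| - 3 * a))
        = fun x => x ^ 2 - 4 * a * |x| + 3 * a ^ 2 := by
      funext x
      rw [← sq_abs x]
      ring
    have hqi : Integrable (fun x : ℝ => (|x| - a) * (|x| - 3 * a)) μ := by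
      rw [hq]
      exact (hint.sub (hint1.const_mul _)).add (integrable_const _)
    have hs : Integrable (fun x : ℝ => x ^ 2 - 4 * a * |x|) μ := hint.sub (hint1.const_mul _)
    have hqe : ∫ x, (|x| - a) * (|x| - 3 * a) ∂μ
        = (∫ x, x^2 ∂μ) - 4 * a * (∫ x, |x| ∂μ) + 3 * a ^ 2 := by
      rw [hq, integral_add hs (integrable_const _),
        integral_sub hint (hint1.const_mul _), integral_const_mul]
      simp
    have hd : ∫ x, (|x| - a) * (|x| - 3 * a) ∂μ
        = ∫ x, f x * ((|x| - a) * (|x| - 3 * a)) := by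
      rw [hμ, integral_withDensity_eq_integral_toReal_smul (by fun_prop)
        (ae_of_all _ fun x => ENNReal.ofReal_lt_top)]
      simp [ENNReal.toReal_ofReal (hf_nonneg _)]
    have hdi : Integrable (fun x => f x * ((|x| - a) * (|x| - 3 * a))) := by
      rw [hμ, integrable_withDensity_iff_integrable_smul' (by fun_prop)
        (ae_of_all _ fun x => ENNReal.ofReal_lt_top)] at hqi
      simpa [ENNReal.toReal_ofReal (hf_nonneg _)] using hqi
    have hci : Integrable ((Set.Icc (-(3 * a)) (3 * a)).indicator
        (fun x => f a * ((|x| - a) * (|x| - 3 * a)))) := by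
      rw [integrable_indicator_iff measurableSet_Icc]
      exact Continuous.integrableOn_Icc (by fun_prop)
    have hle := integral_mono hci hdi (indicator_quad_le f hf_nonneg hsymm hmono a ha)
    rw [integral_indicator measurableSet_Icc, integral_const_mul,
      integral_quad_abs_eq_zero a ha, mul_zero] at hle
    rw [← hqe, hd]
    exact hle
  have hm : 0 ≤ ∫ x, |x| ∂μ := integral_nonneg fun x => abs_nonneg x
  rcases hm.eq_or_lt with h0 | h0
  · rw [← h0, hvar]
    nlinarith [sq_nonneg σ]
  -- `a = (2/3) E|X|` minimises the quadratic in `key`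
  · have h := key (2 / 3 * ∫ x, |x| ∂μ) (by positivity)
    rw [hvar] at h ⊢
    nlinarith
end
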